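/- arXiv:2003.14302 — 3 statements merged into one kernel-verified Lean document; each statement's English description precedes it below -/
import Mathlib

section
/- Let V be a real vector space, K ⊆ V a nonempty convex set, and o ∈ V a point outside the affine hull of K. Let ℓ ∈ ℕ, u = {1, …, ℓ}, and for each k ∈ u let f_k : P(K,o) → ℝ ∪ {+∞} be a generalized affine map and α_k ∈ ℝ; let s ⊆ u and P(K,o)_u^s = {x ∈ P(K,o) : f_k(x) ≤ α_k for all k ∈ u \ s, and f_k(x) = α_k for all k ∈ s}. Suppose K has no face of dimension belonging to {1, …, ℓ}. Then every extreme point of P(K,o)_u^s is a convex combination of one extreme point of K and the apex o; i.e., every extreme point x of P(K,o)_u^s satisfies x = o or x = (1−λ)σ + λo for some extreme point σ of K and some λ ∈ [0,1]. -/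
variable {V : Type*} [AddCommGroup V] [Module ℝ V]

/-- `E` is an extreme subset of `K`: whenever a point of `E` is written as
`(1-l)•y + l•z` with `y, z ∈ K` and `l ∈ (0,1)`, both `y` and `z` lie in `E`. -/
def IsExtremeSubset (K E : Set V) : Prop :=
  E ⊆ K ∧ ∀ x ∈ E, ∀ y ∈ K, ∀ z ∈ K, ∀ l : ℝ, l ∈ Set.Ioo (0:ℝ) 1 →
    x = (1 - l) • y + l • z → y ∈ E ∧ z ∈ E

/-- `F` is a face of `K`: a convex extreme subset of `K`. -/
def IsFaceOf (K F : Set V) : Prop := Convex ℝ F ∧ IsExtremeSubset K F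

/-- The face of `K` generated by `x`: the smallest face of `K` containing `x`
(the intersection of all faces of `K` containing `x`). -/
def genFace (K : Set V) (x : V) : Set V := ⋂₀ {F | IsFaceOf K F ∧ x ∈ F}

/-- The relative algebraic interior of `C`: all `x ∈ C` such that for every
`y` in the affine hull of `C` there is `ε > 0` with `x ± ε(y - x) ∈ C`. -/
def riSet (C : Set V) : Set V :=
  {x | x ∈ C ∧ ∀ y ∈ affineSpan ℝ C, ∃ ε : ℝ, 0 < ε ∧
    x + ε • (y - x) ∈ C ∧ x - ε • (y - x) ∈ C}

/-- A generalized affine map on `K` with values in `ℝ ∪ {+∞}` (modelled by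
`EReal` values that are never `⊥` on `K`), affine with the extended arithmetic
`0·(+∞) = 0`, `λ·(+∞) = +∞` for `λ > 0`, `α + (+∞) = +∞`. -/
def IsGenAffine (K : Set V) (f : V → EReal) : Prop :=
  (∀ x ∈ K, f x ≠ ⊥) ∧
  ∀ x ∈ K, ∀ y ∈ K, ∀ l : ℝ, l ∈ Set.Icc (0:ℝ) 1 →
    f ((1 - l) • x + l • y) = ((1 - l : ℝ) : EReal) * f x + ((l : ℝ) : EReal) * f y

/-- `x` is an extreme point of `K`, i.e. `{x}` is an extreme subset of `K`. -/
def IsExtremePoint (K : Set V) (x : V) : Prop := IsExtremeSubset K {x}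

/-- The pyramid with apex `o` over `F`: the union of all closed segments
joining points of `F` with `o`; by convention `pyr ∅ o = {o}`. -/
def pyr (F : Set V) (o : V) : Set V := {o} ∪ ⋃ x ∈ F, segment ℝ x o

/-!
A point of the pyramid other than `o` is `τ σ` with `σ ∈ K` and `τ` an injective homothety centred
at `o`. Pulling the maps `f k` back along `τ`, an extreme point `τ σ` of the constrained pyramid
gives an extreme point `σ` of a fibre of `ℓ` generalized affine maps on `K`. The directions in which
one can move both ways from the point `(σ, g σ)` inside the joint graph of these maps form a linear
space that projects onto the direction space of the face of `K` generated by `σ`, and that embeds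
into `ℝ^ℓ` because `σ` is extreme in its fibre. So this face has dimension at most `ℓ`, hence `0`.
-/

open Set

variable {E : Type*} [AddCommGroup E] [Module ℝ E] {ι : Type*} {K : Set V} {x y z : V}

section Extreme

variable {F C : Set V}

theorem isExtremeSubset_iff_isExtreme : IsExtremeSubset K F ↔ IsExtreme ℝ K F := by
  constructor
  · rintro ⟨hFK, h⟩
    refine ⟨hFK, fun y hy z hz x hx ⟨a, b, ha, hb, hab, hxyz⟩ => ?_⟩
    obtain rfl : a = 1 - b := by linarith
    exact (h x hx y hy z hz b ⟨hb, by linarith⟩ hxyz.symm).1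
  · refine fun h => ⟨h.subset, fun x hx y hy z hz l hl hxyz => ?_⟩
    have hseg : x ∈ openSegment ℝ y z := ⟨1 - l, l, sub_pos.2 hl.2, hl.1, by ring, hxyz.symm⟩
    exact ⟨h.left_mem_of_mem_openSegment hy hz hx hseg,
      h.right_mem_of_mem_openSegment hy hz hx hseg⟩

theorem isExtremePoint_iff_mem_extremePoints : IsExtremePoint K x ↔ x ∈ K.extremePoints ℝ :=
  isExtremeSubset_iff_isExtreme.trans isExtreme_singleton

theorem IsExtremePoint.of_map_affineMap {D : Set E} (τ : V →ᵃ[ℝ] E) (hτ : Function.Injective τ)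
    (hCD : MapsTo τ C D) (hx : x ∈ C) (hτx : IsExtremePoint D (τ x)) : IsExtremePoint C x := by
  rw [isExtremePoint_iff_mem_extremePoints, mem_extremePoints_iff_left] at hτx ⊢
  refine ⟨hx, fun y hy z hz hxyz => hτ (hτx.2 _ (hCD hy) _ (hCD hz) ?_)⟩
  rw [← image_openSegment]
  exact mem_image_of_mem τ hxyz

end Extreme

section GeneratedFace

/-- The cone of feasible directions of `K` at `x`, generated by the differences `y - x` with
`y ∈ K`. Its lineality space turns out to be the direction space of the face of `K` generated
by `x`. -/
def feasibleCone (K : Set V) (x : V) : PointedCone ℝ V := PointedCone.hull ℝ {v | x + v ∈ K}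

theorem sub_mem_feasibleCone (hy : y ∈ K) : y - x ∈ feasibleCone K x :=
  PointedCone.subset_hull (by simpa using hy)

theorem mem_feasibleCone_iff (hK : Convex ℝ K) (hx : x ∈ K) {v : V} :
    v ∈ feasibleCone K x ↔ ∃ c : ℝ, 0 < c ∧ x + c • v ∈ K := by
  have hconv : Convex ℝ {v | x + v ∈ K} := hK.translate_preimage_right x
  constructor
  · intro hv
    have hpointed : (ConvexCone.hull ℝ {v | x + v ∈ K}).Pointed :=
      ConvexCone.subset_hull (by simpa using hx)
    have hle : feasibleCone K x ≤ (ConvexCone.hull ℝ {v | x + v ∈ K}).toPointedCone hpointed :=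
      Submodule.span_le.2 ConvexCone.subset_hull
    obtain ⟨r, hr, w, hw, rfl⟩ := (ConvexCone.mem_hull_of_convex hconv).1 (hle hv)
    exact ⟨r⁻¹, inv_pos.2 hr, by simpa [smul_smul, hr.ne'] using hw⟩
  · rintro ⟨c, hc, hcv⟩
    exact (PointedCone.smul_mem_iff _ hc).1 (PointedCone.subset_hull hcv)

theorem mem_lineal_feasibleCone_iff (hK : Convex ℝ K) (hx : x ∈ K) {v : V} :
    v ∈ (feasibleCone K x).lineal ↔ ∃ c : ℝ, 0 < c ∧ x + c • v ∈ K ∧ x - c • v ∈ K := by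
  simp only [PointedCone.mem_lineal, mem_feasibleCone_iff hK hx, smul_neg, ← sub_eq_add_neg]
  refine ⟨?_, fun ⟨c, hc, hpos, hneg⟩ => ⟨⟨c, hc, hpos⟩, c, hc, hneg⟩⟩
  rintro ⟨⟨a, ha, hpos⟩, b, hb, hneg⟩
  refine ⟨a * b / (a + b), by positivity, ?_, ?_⟩
  · have := hK.add_smul_mem hx hpos (t := b / (a + b))
      ⟨by positivity, (div_le_one (by positivity)).2 (by linarith)⟩
    convert this using 2
    module
  · rw [sub_eq_add_neg] at hneg
    have := hK.add_smul_mem hx hneg (t := a / (a + b))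
      ⟨by positivity, (div_le_one (by positivity)).2 (by linarith)⟩
    convert this using 1
    module

theorem isFaceOf_setOf_sub_mem_feasibleCone (hK : Convex ℝ K) (x : V) :
    IsFaceOf K {y ∈ K | x - y ∈ feasibleCone K x} := by
  refine ⟨?_, isExtremeSubset_iff_isExtreme.2 ⟨fun y hy => hy.1, ?_⟩⟩
  · rintro y ⟨hy, hxy⟩ z ⟨hz, hxz⟩ a b ha hb hab
    refine ⟨hK hy hz ha hb hab, ?_⟩
    have hcombo : x - (a • y + b • z) = a • (x - y) + b • (x - z) := by
      obtain rfl : a = 1 - b := by linarith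
      module
    exact hcombo ▸ (feasibleCone K x).convex hxy hxz ha hb hab
  · rintro y hy z hz p ⟨-, hxp⟩ ⟨a, b, ha, hb, hab, rfl⟩
    refine ⟨hy, (PointedCone.smul_mem_iff _ ha).1 ?_⟩
    have hdecomp : a • (x - y) = (x - (a • y + b • z)) + b • (z - x) := by
      obtain rfl : a = 1 - b := by linarith
      module
    rw [hdecomp]
    exact add_mem hxp (PointedCone.smul_mem _ hb.le (sub_mem_feasibleCone hz))

theorem genFace_eq_setOf_sub_mem_feasibleCone (hK : Convex ℝ K) (hx : x ∈ K) :
    genFace K x = {y ∈ K | x - y ∈ feasibleCone K x} := by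
  apply Subset.antisymm
  · exact sInter_subset_of_mem ⟨isFaceOf_setOf_sub_mem_feasibleCone hK x, hx, by simp⟩
  · rintro y ⟨hy, hxy⟩ F ⟨⟨-, hF⟩, hxF⟩
    obtain ⟨c, hc, hcy⟩ := (mem_feasibleCone_iff hK hx).1 hxy
    refine (isExtremeSubset_iff_isExtreme.1 hF).left_mem_of_mem_openSegment hy hcy hxF
      ⟨c / (1 + c), 1 / (1 + c), by positivity, by positivity, by field_simp; ring, ?_⟩
    match_scalars <;> field_simp
    ring

theorem isFaceOf_genFace (hK : Convex ℝ K) (hx : x ∈ K) : IsFaceOf K (genFace K x) := by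
  rw [genFace_eq_setOf_sub_mem_feasibleCone hK hx]
  exact isFaceOf_setOf_sub_mem_feasibleCone hK x

theorem self_mem_genFace (K : Set V) (x : V) : x ∈ genFace K x :=
  fun _ hF => hF.2

theorem vectorSpan_genFace_eq_lineal (hK : Convex ℝ K) (hx : x ∈ K) :
    vectorSpan ℝ (genFace K x) = (feasibleCone K x).lineal := by
  have hgen := genFace_eq_setOf_sub_mem_feasibleCone hK hx
  apply le_antisymm
  · rw [vectorSpan_eq_span_vsub_set_right ℝ (self_mem_genFace K x), Submodule.span_le]
    rintro _ ⟨y, hy, rfl⟩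
    rw [hgen] at hy
    exact ⟨sub_mem_feasibleCone hy.1, by simpa using hy.2⟩
  · rintro v ⟨hpos, hneg⟩
    obtain ⟨c, hc, hcv⟩ := (mem_feasibleCone_iff hK hx).1 hpos
    have hmem : x + c • v ∈ genFace K x := by
      rw [hgen]
      exact ⟨hcv, by simpa using PointedCone.smul_mem (feasibleCone K x) hc.le hneg⟩
    refine (Submodule.smul_mem_iff _ hc.ne').1 ?_
    simpa using vsub_mem_vectorSpan ℝ hmem (self_mem_genFace K x)

theorem isExtremePoint_of_vectorSpan_genFace_eq_bot (hK : Convex ℝ K) (hx : x ∈ K)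
    (hbot : vectorSpan ℝ (genFace K x) = ⊥) : IsExtremePoint K x := by
  have hsingleton : genFace K x = {x} :=
    ((vectorSpan_eq_bot_iff_subsingleton ℝ).1 hbot).eq_singleton_of_mem (self_mem_genFace K x)
  have hface := isFaceOf_genFace hK hx
  rw [hsingleton] at hface
  exact hface.2

end GeneratedFace

section GenAffine

variable {f : V → EReal} {g : ι → V → EReal} {r : ι → ℝ}

theorem IsGenAffine.map_combo (hf : IsGenAffine K f) (hy : y ∈ K) (hz : z ∈ K) {a b : ℝ}
    (ha : 0 ≤ a) (hb : 0 ≤ b) (hab : a + b = 1) : f (a • y + b • z) = a * f y + b * f z := by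
  obtain rfl : a = 1 - b := by linarith
  exact hf.2 y hy z hz b ⟨hb, by linarith⟩

theorem IsGenAffine.comp_affineMap {D : Set E} {f : E → EReal} (hf : IsGenAffine D f)
    (τ : V →ᵃ[ℝ] E) (hτ : MapsTo τ K D) : IsGenAffine K (f ∘ τ) := by
  refine ⟨fun x hx => hf.1 _ (hτ hx), fun x hx y hy l hl => ?_⟩
  rw [Function.comp_apply, Convex.combo_affine_apply (by ring)]
  exact hf.2 _ (hτ hx) _ (hτ hy) l hl

theorem IsGenAffine.ne_top_of_mem_openSegment (hf : IsGenAffine K f) (hy : y ∈ K) (hz : z ∈ K)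
    (hx : x ∈ openSegment ℝ y z) (hfx : f x ≠ ⊤) : f y ≠ ⊤ := by
  obtain ⟨a, b, ha, hb, hab, rfl⟩ := hx
  intro hfy
  have hbz : (b : EReal) * f z ≠ ⊥ := by
    simp [EReal.mul_eq_bot, hf.1 z hz, hb.not_gt]
  rw [hf.map_combo hy hz ha.le hb.le hab, hfy, EReal.coe_mul_top_of_pos ha,
    EReal.top_add_of_ne_bot hbz] at hfx
  exact hfx rfl

/-- The joint graph over `K` of a family of extended real maps, restricted to the points of `K` at
which all of them are finite. A feasible direction of the joint graph is a feasible direction of `K`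
together with the slopes of the maps along it. -/
def jointGraph (K : Set V) (g : ι → V → EReal) : Set (V × (ι → ℝ)) :=
  {p | p.1 ∈ K ∧ ∀ k, g k p.1 = p.2 k}

theorem convex_jointGraph (hK : Convex ℝ K) (hg : ∀ k, IsGenAffine K (g k)) :
    Convex ℝ (jointGraph K g) := by
  rintro p ⟨hp, hgp⟩ q ⟨hq, hgq⟩ a b ha hb hab
  refine ⟨hK hp hq ha hb hab, fun k => ?_⟩
  change g k (a • p.1 + b • q.1) = ((a * p.2 k + b * q.2 k : ℝ) : EReal)
  rw [(hg k).map_combo hp hq ha hb hab, hgp, hgq]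
  norm_cast

theorem exists_mem_jointGraph_of_mem_openSegment (hg : ∀ k, IsGenAffine K (g k)) (hy : y ∈ K)
    (hz : z ∈ K) (hx : x ∈ openSegment ℝ y z) (hxr : (x, r) ∈ jointGraph K g) :
    ∃ p : ι → ℝ, (y, p) ∈ jointGraph K g := by
  refine ⟨fun k => (g k y).toReal, hy, fun k => (EReal.coe_toReal ?_ ((hg k).1 y hy)).symm⟩
  refine (hg k).ne_top_of_mem_openSegment hy hz hx ?_
  rw [hxr.2 k]
  exact EReal.coe_ne_top _

theorem lineal_feasibleCone_le_map_fst_jointGraph (hK : Convex ℝ K)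
    (hg : ∀ k, IsGenAffine K (g k)) (hxr : (x, r) ∈ jointGraph K g) :
    (feasibleCone K x).lineal ≤
      (feasibleCone (jointGraph K g) (x, r)).lineal.map (LinearMap.fst ℝ V (ι → ℝ)) := by
  intro v hv
  obtain ⟨c, hc, hpos, hneg⟩ := (mem_lineal_feasibleCone_iff hK hxr.1).1 hv
  have hmid := mem_openSegment_add_sub (𝕜 := ℝ) x (c • v)
  obtain ⟨p, hp⟩ := exists_mem_jointGraph_of_mem_openSegment hg hpos hneg hmid hxr
  obtain ⟨q, hq⟩ := exists_mem_jointGraph_of_mem_openSegment hg hneg hpos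
    (openSegment_symm ℝ (x + c • v) _ ▸ hmid) hxr
  have hconv := convex_jointGraph hK hg
  have hmean : (x, (2⁻¹ : ℝ) • p + (2⁻¹ : ℝ) • q) ∈ jointGraph K g := by
    convert hconv hp hq (a := 2⁻¹) (b := 2⁻¹) (by norm_num) (by norm_num) (by norm_num) using 1
    ext1
    · simp only [Prod.fst_add, Prod.smul_fst]
      module
    · rfl
  have hr_eq : (2⁻¹ : ℝ) • p + (2⁻¹ : ℝ) • q = r :=
    funext fun k => EReal.coe_injective ((hmean.2 k).symm.trans (hxr.2 k))
  refine ⟨(v, c⁻¹ • (p - r)), (mem_lineal_feasibleCone_iff hconv hxr).2 ⟨c, hc, ?_, ?_⟩, rfl⟩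
  · convert hp using 1
    simp [smul_smul, hc.ne']
  · convert hq using 1
    ext1
    · rfl
    · simp only [Prod.snd_sub, Prod.smul_snd, smul_smul, mul_inv_cancel₀ hc.ne', ← hr_eq]
      module

theorem eq_zero_of_mem_lineal_feasibleCone_jointGraph (hK : Convex ℝ K)
    (hg : ∀ k, IsGenAffine K (g k)) (hx : IsExtremePoint {y ∈ K | ∀ k, g k y = r k} x) {v : V}
    (hv : (v, 0) ∈ (feasibleCone (jointGraph K g) (x, r)).lineal) : v = 0 := by
  obtain ⟨hxr, hextreme⟩ :=
    mem_extremePoints_iff_left.1 (isExtremePoint_iff_mem_extremePoints.1 hx)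
  obtain ⟨c, hc, hpos, hneg⟩ := (mem_lineal_feasibleCone_iff (convex_jointGraph hK hg) hxr).1 hv
  have hpos' : x + c • v ∈ {y ∈ K | ∀ k, g k y = r k} := by simpa [jointGraph] using hpos
  have hneg' : x - c • v ∈ {y ∈ K | ∀ k, g k y = r k} := by simpa [jointGraph] using hneg
  simpa [hc.ne'] using hextreme _ hpos' _ hneg' (mem_openSegment_add_sub x (c • v))

end GenAffine

section Dimension

theorem rank_map_fst_le_finrank {k M N : Type*} [DivisionRing k] [AddCommGroup M] [Module k M]
    [AddCommGroup N] [Module k N] [Module.Finite k N] (T : Submodule k (M × N))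
    (hT : ∀ v, (v, 0) ∈ T → v = 0) :
    Module.rank k (T.map (LinearMap.fst k M N)) ≤ Module.finrank k N := by
  have hinj : Function.Injective (LinearMap.snd k M N ∘ₗ T.subtype) := by
    rw [← LinearMap.ker_eq_bot, LinearMap.ker_eq_bot']
    rintro ⟨⟨v, u⟩, hvu⟩ (rfl : u = 0)
    simp [hT v hvu]
  have : Module.Finite k T := Module.Finite.of_injective _ hinj
  rw [← Module.finrank_eq_rank]
  exact_mod_cast (Submodule.finrank_map_le _ T).trans
    (LinearMap.finrank_le_finrank_of_injective hinj)

theorem rank_vectorSpan_genFace_le_card [Finite ι] (hK : Convex ℝ K) {g : ι → V → EReal}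
    {r : ι → ℝ} (hg : ∀ k, IsGenAffine K (g k))
    (hx : IsExtremePoint {y ∈ K | ∀ k, g k y = r k} x) :
    Module.rank ℝ (vectorSpan ℝ (genFace K x)) ≤ Nat.card ι := by
  have := Fintype.ofFinite ι
  have hxr : x ∈ {y ∈ K | ∀ k, g k y = r k} := hx.1 rfl
  calc Module.rank ℝ (vectorSpan ℝ (genFace K x))
      = Module.rank ℝ (feasibleCone K x).lineal := by rw [vectorSpan_genFace_eq_lineal hK hxr.1]
    _ ≤ _ := Submodule.rank_mono (lineal_feasibleCone_le_map_fst_jointGraph hK hg hxr)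
    _ ≤ Module.finrank ℝ (ι → ℝ) := rank_map_fst_le_finrank _ fun _ =>
      eq_zero_of_mem_lineal_feasibleCone_jointGraph hK hg hx
    _ = Nat.card ι := by rw [Module.finrank_fintype_fun_eq_card, Nat.card_eq_fintype_card]

theorem isExtremePoint_of_isExtremePoint_fiber [Finite ι] (hK : Convex ℝ K) {g : ι → V → EReal}
    {r : ι → ℝ} (hg : ∀ k, IsGenAffine K (g k))
    (hKfaces : ∀ F : Set V, IsFaceOf K F → ∀ d : ℕ, 1 ≤ d → d ≤ Nat.card ι →
      Module.rank ℝ (vectorSpan ℝ F) ≠ (d : Cardinal))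
    (hx : IsExtremePoint {y ∈ K | ∀ k, g k y = r k} x) : IsExtremePoint K x := by
  have hxK : x ∈ K := (hx.1 rfl).1
  obtain ⟨d, hd, hrank⟩ :=
    Cardinal.exists_nat_eq_of_le_nat (rank_vectorSpan_genFace_le_card hK hg hx)
  have hd0 : d = 0 := by
    by_contra hne
    exact hKfaces _ (isFaceOf_genFace hK hxK) d (Nat.one_le_iff_ne_zero.2 hne) hd hrank
  refine isExtremePoint_of_vectorSpan_genFace_eq_bot hK hxK (Submodule.rank_eq_zero.1 ?_)
  rw [hrank, hd0, Nat.cast_zero]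

end Dimension

section Pyramid

theorem mem_pyr_iff {o : V} :
    x ∈ pyr K o ↔ x = o ∨ ∃ σ ∈ K, ∃ l ∈ Ico (0 : ℝ) 1, x = (1 - l) • σ + l • o := by
  constructor
  · rintro (rfl | hx)
    · exact .inl rfl
    simp only [mem_iUnion] at hx
    obtain ⟨σ, hσ, a, l, ha, hl, hal, rfl⟩ := hx
    obtain rfl : a = 1 - l := by linarith
    rcases ha.eq_or_lt with ha0 | ha0
    · left
      obtain rfl : l = 1 := by linarith
      simp
    · exact .inr ⟨σ, hσ, l, ⟨hl, sub_pos.1 ha0⟩, rfl⟩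
  · rintro (rfl | ⟨σ, hσ, l, ⟨hl0, hl1⟩, rfl⟩)
    · exact .inl rfl
    · exact .inr (mem_biUnion hσ ⟨1 - l, l, by linarith, hl0, by ring, rfl⟩)

theorem stmt16_general [Finite ι] (hK : Convex ℝ K) (o : V)
    (f : ι → V → EReal) (hf : ∀ k, IsGenAffine (pyr K o) (f k)) (α : ι → ℝ) (s : Set ι)
    (hKfaces : ∀ F : Set V, IsFaceOf K F → ∀ d : ℕ, 1 ≤ d → d ≤ Nat.card ι →
      Module.rank ℝ (vectorSpan ℝ F) ≠ (d : Cardinal))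
    (hx : IsExtremePoint {y ∈ pyr K o | (∀ k ∉ s, f k y ≤ (α k : EReal)) ∧
      (∀ k ∈ s, f k y = (α k : EReal))} x) :
    x = o ∨ ∃ σ, IsExtremePoint K σ ∧ ∃ l ∈ Icc (0 : ℝ) 1, x = (1 - l) • σ + l • o := by
  obtain ⟨hxpyr, hle, heq⟩ := hx.1 rfl
  refine (mem_pyr_iff.1 hxpyr).imp_right ?_
  rintro ⟨σ, hσ, l, hl, hxσ⟩
  refine ⟨σ, ?_, l, Ico_subset_Icc_self hl, hxσ⟩
  let τ : V →ᵃ[ℝ] V := AffineMap.homothety o (1 - l)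
  have hτ_apply (y : V) : τ y = (1 - l) • y + l • o := by
    simp only [τ, AffineMap.homothety_apply, vsub_eq_sub, vadd_eq_add]
    module
  have hτ_inj : Function.Injective τ := AffineMap.homothety_injective o (sub_pos.2 hl.2).ne'
  have hτ_maps : MapsTo τ K (pyr K o) := fun y hy => mem_pyr_iff.2 (.inr ⟨y, hy, l, hl, hτ_apply y⟩)
  obtain rfl : x = τ σ := hxσ.trans (hτ_apply σ).symm
  have hfinite (k : ι) : f k (τ σ) ≠ ⊤ := by
    refine ne_top_of_le_ne_top (EReal.coe_ne_top (α k)) ?_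
    by_cases hk : k ∈ s
    exacts [(heq k hk).le, hle k hk]
  have hreal (k : ι) : f k (τ σ) = (f k (τ σ)).toReal :=
    (EReal.coe_toReal (hfinite k) ((hf k).1 _ hxpyr)).symm
  refine isExtremePoint_of_isExtremePoint_fiber hK (fun k => (hf k).comp_affineMap τ hτ_maps)
    hKfaces (r := fun k => (f k (τ σ)).toReal) (.of_map_affineMap τ hτ_inj ?_ ⟨hσ, hreal⟩ hx)
  rintro y ⟨hy, hfy⟩
  have hfy' (k : ι) : f k (τ y) = f k (τ σ) := (hfy k).trans (hreal k).symm
  exact ⟨hτ_maps hy, by simpa only [hfy'] using ⟨hle, heq⟩⟩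

end Pyramid

theorem stmt16 (K : Set V) (hK : Convex ℝ K) (hne : K.Nonempty)
    (o : V) (ho : o ∉ affineSpan ℝ K) (ℓ : ℕ)
    (f : Fin ℓ → V → EReal) (hf : ∀ k, IsGenAffine (pyr K o) (f k))
    (α : Fin ℓ → ℝ) (s : Set (Fin ℓ))
    (hKfaces : ∀ F : Set V, IsFaceOf K F → ∀ d : ℕ, 1 ≤ d → d ≤ ℓ →
      Module.rank ℝ ↥(vectorSpan ℝ F) ≠ (d : Cardinal)) :
    ∀ x : V,
      IsExtremePoint {y ∈ pyr K o | (∀ k ∉ s, f k y ≤ (α k : EReal)) ∧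
                                    (∀ k ∈ s, f k y = (α k : EReal))} x →
      x = o ∨ ∃ σ : V, IsExtremePoint K σ ∧
        ∃ l : ℝ, l ∈ Set.Icc (0:ℝ) 1 ∧ x = (1 - l) • σ + l • o :=
  fun _ hx => stmt16_general hK o f hf α s (by simpa only [Nat.card_fin] using hKfaces) hx
end

section
/- Let K ⊂ ℝ[x] denote the convex set of univariate real polynomials with positive leading coefficient (in particular all elements of K are nonzero). For n ∈ ℕ let F_n = {q ∈ K : deg(q) ≤ n}. Then: (1) for every p ∈ K, the face of K generated by p is F_K(p) = F_{deg(p)}; (2) for every n ∈ ℕ, the relative algebraic interior of F_n is ri(F_n) = {q ∈ K : deg(q) = n}; (3) every nonempty extreme subset of K is equal to K or to F_n for some n ∈ ℕ. -/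
variable {V : Type*} [AddCommGroup V] [Module ℝ V]

/-!
Everything rests on one perturbation: if `deg r ≤ deg p`, then `p + t r` keeps the degree of `p`
and the sign of its leading coefficient for all small `t`. Hence `p` lies in the relative algebraic
interior of `F_{deg p}`, while an extreme subset of `K` contains every `C ⊆ K` whose relative
interior it meets. So an extreme subset `E` contains `F_{deg p}` for each `p ∈ E`, and is determined
by the supremum of the degrees of its elements. The sets `F_n` are themselves faces because leading
terms of elements of `K` cannot cancel in a sum.
-/

section ConvexGeometry

variable {K E F C : Set V} {x y : V}

theorem IsExtremeSubset.mem_of_sub_smul_sub_mem (hE : IsExtremeSubset K E) (hx : x ∈ E)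
    (hy : y ∈ K) {ε : ℝ} (hε : 0 < ε) (hxy : x - ε • (y - x) ∈ K) : y ∈ E := by
  have hε' : 1 + ε ≠ 0 := by positivity
  have hl : ε / (1 + ε) ∈ Set.Ioo (0 : ℝ) 1 :=
    ⟨by positivity, (div_lt_one (by positivity)).2 (by linarith)⟩
  have hcomb : x = (1 - ε / (1 + ε)) • (x - ε • (y - x)) + (ε / (1 + ε)) • y := by
    match_scalars <;> field_simp <;> ring
  exact (hE.2 x hx _ hxy y hy _ hl hcomb).2

theorem IsExtremeSubset.subset_of_mem_riSet (hE : IsExtremeSubset K E) (hC : C ⊆ K)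
    (hxE : x ∈ E) (hxC : x ∈ riSet C) : C ⊆ E := by
  intro y hy
  obtain ⟨ε, hε, -, hmem⟩ := hxC.2 y (subset_affineSpan ℝ C hy)
  exact hE.mem_of_sub_smul_sub_mem hxE (hC hy) hε (hC hmem)

theorem IsFaceOf.genFace_eq_of_mem_riSet (hF : IsFaceOf K F) (hx : x ∈ riSet F) :
    genFace K x = F :=
  Set.Subset.antisymm (Set.sInter_subset_of_mem ⟨hF, hx.1⟩)
    (Set.subset_sInter fun _ hG => hG.1.2.subset_of_mem_riSet hF.2.1 hG.2 hx)

end ConvexGeometry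

section Polynomial

open Polynomial

theorem leadingCoeff_pos_and_natDegree_eq_iff {R : Type*} [Semiring R] [Preorder R]
    {p : R[X]} {n : ℕ} :
    0 < p.leadingCoeff ∧ p.natDegree = n ↔ p.natDegree ≤ n ∧ 0 < p.coeff n := by
  constructor
  · rintro ⟨hp, rfl⟩
    exact ⟨le_rfl, hp⟩
  · rintro ⟨hle, hpos⟩
    obtain rfl : p.natDegree = n := natDegree_eq_of_le_of_coeff_ne_zero hle hpos.ne'
    exact ⟨hpos, rfl⟩

theorem coeff_nonneg_of_leadingCoeff_pos {R : Type*} [Semiring R] [Preorder R]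
    {p : R[X]} {n : ℕ} (hp : 0 < p.leadingCoeff) (hn : p.natDegree ≤ n) : 0 ≤ p.coeff n := by
  rcases hn.lt_or_eq with hlt | rfl
  · rw [coeff_eq_zero_of_natDegree_lt hlt]
  · exact hp.le

theorem leadingCoeff_add_pos_and_natDegree_add_eq_max {R : Type*} [Semiring R] [Preorder R]
    [AddLeftMono R] [AddRightMono R] {p q : R[X]}
    (hp : 0 < p.leadingCoeff) (hq : 0 < q.leadingCoeff) :
    0 < (p + q).leadingCoeff ∧ (p + q).natDegree = max p.natDegree q.natDegree := by
  refine leadingCoeff_pos_and_natDegree_eq_iff.2 ⟨natDegree_add_le p q, ?_⟩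
  rw [coeff_add]
  rcases le_total p.natDegree q.natDegree with h | h
  · rw [max_eq_right h]
    exact hq.trans_le (le_add_of_nonneg_left (coeff_nonneg_of_leadingCoeff_pos hp h))
  · rw [max_eq_left h]
    exact hp.trans_le (le_add_of_nonneg_right (coeff_nonneg_of_leadingCoeff_pos hq h))

theorem leadingCoeff_smul_pos_and_natDegree_smul_eq {R : Type*} [Semiring R] [Preorder R]
    [PosMulStrictMono R] {p : R[X]} {a : R} (ha : 0 < a) (hp : 0 < p.leadingCoeff) :
    0 < (a • p).leadingCoeff ∧ (a • p).natDegree = p.natDegree :=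
  leadingCoeff_pos_and_natDegree_eq_iff.2
    ⟨natDegree_smul_le a p, by rw [coeff_smul, smul_eq_mul]; exact mul_pos ha hp⟩

theorem exists_pos_forall_abs_le_leadingCoeff_add_smul_pos {k : Type*} [Field k] [LinearOrder k]
    [IsStrictOrderedRing k] {p r : k[X]} (hp : 0 < p.leadingCoeff)
    (hr : r.natDegree ≤ p.natDegree) :
    ∃ ε : k, 0 < ε ∧ ∀ t : k, |t| ≤ ε →
      0 < (p + t • r).leadingCoeff ∧ (p + t • r).natDegree = p.natDegree := by
  obtain ⟨ε, hε, hlt⟩ := exists_pos_mul_lt hp |r.coeff p.natDegree|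
  refine ⟨ε, hε, fun t ht => leadingCoeff_pos_and_natDegree_eq_iff.2
    ⟨natDegree_add_le_of_degree_le le_rfl ((natDegree_smul_le t r).trans hr), ?_⟩⟩
  have hsmall : |t * r.coeff p.natDegree| < p.leadingCoeff :=
    calc |t * r.coeff p.natDegree| = |r.coeff p.natDegree| * |t| := by rw [abs_mul, mul_comm]
      _ ≤ |r.coeff p.natDegree| * ε := by gcongr
      _ < p.leadingCoeff := hlt
  rw [coeff_add, coeff_smul, smul_eq_mul, coeff_natDegree]
  linarith [neg_lt_of_abs_lt hsmall]

theorem natDegree_le_of_mem_affineSpan {R : Type*} [Ring R] {s : Set R[X]} {n : ℕ}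
    (hs : ∀ p ∈ s, p.natDegree ≤ n) {q : R[X]} (hq : q ∈ affineSpan R s) : q.natDegree ≤ n := by
  have hle : affineSpan R s ≤ (degreeLE R n).toAffineSubspace :=
    affineSpan_le.2 fun p hp => mem_degreeLE.2 (natDegree_le_iff_degree_le.1 (hs p hp))
  exact natDegree_le_iff_degree_le.2 (mem_degreeLE.1 (hle hq))

/-- The convex set `K` of real polynomials with positive leading coefficient. -/
def posPoly : Set ℝ[X] := {p | 0 < p.leadingCoeff}

/-- The set `F_n` of elements of `posPoly` of degree at most `n`. Here `natDegree` is the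
degree because `0 ∉ posPoly`. -/
def posPolyLE (n : ℕ) : Set ℝ[X] := {p | 0 < p.leadingCoeff ∧ p.natDegree ≤ n}

theorem smul_add_smul_mem_posPolyLE_iff {p q : ℝ[X]} {a b : ℝ} {n : ℕ} (ha : 0 < a) (hb : 0 < b)
    (hp : p ∈ posPoly) (hq : q ∈ posPoly) :
    a • p + b • q ∈ posPolyLE n ↔ p ∈ posPolyLE n ∧ q ∈ posPolyLE n := by
  obtain ⟨hap, hdegp⟩ := leadingCoeff_smul_pos_and_natDegree_smul_eq ha hp
  obtain ⟨hbq, hdegq⟩ := leadingCoeff_smul_pos_and_natDegree_smul_eq hb hq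
  obtain ⟨hpos, hdeg⟩ := leadingCoeff_add_pos_and_natDegree_add_eq_max hap hbq
  rw [hdegp, hdegq] at hdeg
  calc a • p + b • q ∈ posPolyLE n ↔ (a • p + b • q).natDegree ≤ n := and_iff_right hpos
    _ ↔ p.natDegree ≤ n ∧ q.natDegree ≤ n := by rw [hdeg, max_le_iff]
    _ ↔ p ∈ posPolyLE n ∧ q ∈ posPolyLE n :=
      and_congr (and_iff_right hp).symm (and_iff_right hq).symm

theorem isFaceOf_posPolyLE (n : ℕ) : IsFaceOf posPoly (posPolyLE n) := by
  refine ⟨convex_iff_forall_pos.2 ?_, fun p hp => hp.1, ?_⟩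
  · intro p hp q hq a b ha hb _
    exact (smul_add_smul_mem_posPolyLE_iff ha hb hp.1 hq.1).2 ⟨hp, hq⟩
  · rintro _ hx y hy z hz l ⟨hl0, hl1⟩ rfl
    exact (smul_add_smul_mem_posPolyLE_iff (sub_pos.2 hl1) hl0 hy hz).1 hx

theorem mem_riSet_posPolyLE_natDegree {p : ℝ[X]} (hp : p ∈ posPoly) :
    p ∈ riSet (posPolyLE p.natDegree) := by
  refine ⟨⟨hp, le_rfl⟩, fun q hq => ?_⟩
  have hdeg : q.natDegree ≤ p.natDegree := natDegree_le_of_mem_affineSpan (fun _ hr => hr.2) hq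
  obtain ⟨ε, hε, hmem⟩ := exists_pos_forall_abs_le_leadingCoeff_add_smul_pos hp
    ((natDegree_sub_le q p).trans (max_le hdeg le_rfl))
  have hplus := hmem ε (abs_of_pos hε).le
  have hminus := hmem (-ε) (by rw [abs_neg, abs_of_pos hε])
  rw [neg_smul, ← sub_eq_add_neg] at hminus
  exact ⟨ε, hε, ⟨hplus.1, hplus.2.le⟩, ⟨hminus.1, hminus.2.le⟩⟩

theorem natDegree_eq_of_mem_riSet_posPolyLE {p : ℝ[X]} {n : ℕ} (hp : p ∈ riSet (posPolyLE n)) :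
    p.natDegree = n := by
  by_contra hne
  have hlt : p.natDegree < n := hp.1.2.lt_of_ne hne
  obtain ⟨ε, hε, -, hpos, hdeg⟩ :=
    hp.2 (X ^ n) (subset_affineSpan ℝ _ ⟨by simp, (natDegree_X_pow n).le⟩)
  have hcoeff : (p - ε • (X ^ n - p)).coeff n = -ε := by
    simp [coeff_eq_zero_of_natDegree_lt hlt]
  linarith [coeff_nonneg_of_leadingCoeff_pos hpos hdeg]

theorem riSet_posPolyLE (n : ℕ) :
    riSet (posPolyLE n) = {p | 0 < p.leadingCoeff ∧ p.natDegree = n} := by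
  ext p
  constructor
  · exact fun hp => ⟨hp.1.1, natDegree_eq_of_mem_riSet_posPolyLE hp⟩
  · rintro ⟨hp, rfl⟩
    exact mem_riSet_posPolyLE_natDegree hp

theorem genFace_posPoly {p : ℝ[X]} (hp : p ∈ posPoly) :
    genFace posPoly p = posPolyLE p.natDegree :=
  (isFaceOf_posPolyLE _).genFace_eq_of_mem_riSet (mem_riSet_posPolyLE_natDegree hp)

theorem posPolyLE_natDegree_subset {E : Set ℝ[X]} (hE : IsExtremeSubset posPoly E) {p : ℝ[X]}
    (hp : p ∈ E) : posPolyLE p.natDegree ⊆ E :=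
  hE.subset_of_mem_riSet (fun _ hq => hq.1) hp (mem_riSet_posPolyLE_natDegree (hE.1 hp))

theorem IsExtremeSubset.eq_posPoly_or_exists_eq_posPolyLE {E : Set ℝ[X]}
    (hE : IsExtremeSubset posPoly E) (hne : E.Nonempty) :
    E = posPoly ∨ ∃ n, E = posPolyLE n := by
  by_cases hb : BddAbove (natDegree '' E)
  · right
    obtain ⟨p, hp, hmax⟩ : ∃ p ∈ E, p.natDegree = sSup (natDegree '' E) :=
      Nat.sSup_mem (hne.image natDegree) hb
    refine ⟨p.natDegree, Set.Subset.antisymm (fun q hq => ⟨hE.1 hq, ?_⟩)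
      (posPolyLE_natDegree_subset hE hp)⟩
    exact hmax ▸ le_csSup hb (Set.mem_image_of_mem natDegree hq)
  · left
    refine Set.Subset.antisymm hE.1 fun q hq => ?_
    obtain ⟨_, ⟨p, hp, rfl⟩, hlt⟩ := not_bddAbove_iff.1 hb q.natDegree
    exact posPolyLE_natDegree_subset hE hp ⟨hq, hlt.le⟩

end Polynomial

theorem stmt17 :
    (∀ p ∈ {p : Polynomial ℝ | 0 < p.leadingCoeff},
      genFace {p : Polynomial ℝ | 0 < p.leadingCoeff} p =
        {q : Polynomial ℝ | 0 < q.leadingCoeff ∧ q.natDegree ≤ p.natDegree}) ∧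
    (∀ n : ℕ,
      riSet {q : Polynomial ℝ | 0 < q.leadingCoeff ∧ q.natDegree ≤ n} =
        {q : Polynomial ℝ | 0 < q.leadingCoeff ∧ q.natDegree = n}) ∧
    (∀ E : Set (Polynomial ℝ),
      IsExtremeSubset {p : Polynomial ℝ | 0 < p.leadingCoeff} E → E.Nonempty →
      E = {p : Polynomial ℝ | 0 < p.leadingCoeff} ∨
      ∃ n : ℕ, E = {q : Polynomial ℝ | 0 < q.leadingCoeff ∧ q.natDegree ≤ n}) :=
  ⟨fun _ hp => genFace_posPoly hp, riSet_posPolyLE,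
    fun _ hE hne => hE.eq_posPoly_or_exists_eq_posPolyLE hne⟩
end

section
/- Let d ∈ ℕ, d ≥ 1, let H₁, H₂ be d×d positive semidefinite complex matrices, let E₁, E₂ ∈ ℝ, and let s ⊆ {1,2}. Let 𝔖_{H₁,E₁,H₂,E₂}^s = {ρ ∈ 𝔖(ℂ^d) : Re Tr(H_k ρ) ≤ E_k for all k ∈ {1,2} \ s and Re Tr(H_k ρ) = E_k for all k ∈ s}. Then 𝔖_{H₁,E₁,H₂,E₂}^s is a compact convex set, and every ρ ∈ 𝔖_{H₁,E₁,H₂,E₂}^s can be represented as ρ = Σ_{i=1}^{d²} p_i σ_i, where (p_i)_{i=1}^{d²} are nonnegative reals summing to 1 and each σ_i is a pure state (a rank-one orthogonal projection) belonging to 𝔖_{H₁,E₁,H₂,E₂}^s. -/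
open scoped Matrix ComplexOrder

/-- `ρ` is a density matrix: positive semidefinite with trace one. -/
def IsDensityMatrix {d : ℕ} (ρ : Matrix (Fin d) (Fin d) ℂ) : Prop :=
  ρ.PosSemidef ∧ ρ.trace = 1

/-- `ρ` is a pure state: a density matrix that is a rank-one orthogonal
projection (equivalently, an idempotent density matrix). -/
def IsPureState {d : ℕ} (ρ : Matrix (Fin d) (Fin d) ℂ) : Prop :=
  IsDensityMatrix ρ ∧ ρ * ρ = ρ

/-! An extreme point `ρ` of the constrained set has small rank. Factor `ρ = B Bᴴ` with `B` of full
column rank `r = rank ρ`. The Hermitian directions `B X Bᴴ` can be followed both ways inside the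
positive semidefinite cone, and they form a real space of dimension `r²`. If `r²` exceeds the number
of linear conditions (the trace and one per constraint), some nonzero direction preserves all of
them, and `ρ` is not extreme. Two constraints leave `r² ≤ 3`, so `r = 1`.

States of bounded rank form a closed set, so by Krein–Milman and the compactness of convex hulls of
compact sets every constrained state is a mixture of constrained states of bounded rank. Density
matrices span a real affine space of dimension less than `d²`, so by Carathéodory `d²` terms
suffice. -/

section

open Module Matrix

section Convexity

variable {𝕜 V : Type*} [Field 𝕜] [LinearOrder 𝕜] [IsStrictOrderedRing 𝕜]
  [AddCommGroup V] [Module 𝕜 V]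

theorem finrank_le_of_mem_extremePoints {U F : Type*} [AddCommGroup U] [Module 𝕜 U]
    [FiniteDimensional 𝕜 U] [AddCommGroup F] [Module 𝕜 F] [FiniteDimensional 𝕜 F]
    {K : Set V} {x : V} (hx : x ∈ K.extremePoints 𝕜) {L : U →ₗ[𝕜] V}
    (hL : Function.Injective L) (f : U →ₗ[𝕜] F)
    (hf : ∀ u, f u = 0 → ∃ ε : 𝕜, 0 < ε ∧ x + ε • L u ∈ K ∧ x - ε • L u ∈ K) :
    finrank 𝕜 U ≤ finrank 𝕜 F := by
  by_contra! hlt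
  obtain ⟨u, hu, hu0⟩ := (Submodule.ne_bot_iff _).1 (f.ker_ne_bot_of_finrank_lt hlt)
  obtain ⟨ε, hε, hadd, hsub⟩ := hf u hu
  have hmid : x ∈ openSegment 𝕜 (x + ε • L u) (x - ε • L u) :=
    ⟨1 / 2, 1 / 2, by norm_num, by norm_num, by norm_num, by module⟩
  have hεLu : ε • L u = 0 := by simpa using hx.2 hadd hsub hmid
  exact hu0 (hL (by simpa [hε.ne'] using hεLu))

theorem exists_sum_smul_eq_of_mem_convexHull [FiniteDimensional 𝕜 V] {ι : Type*} [Fintype ι]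
    {S : Set V} (hS : finrank 𝕜 (vectorSpan 𝕜 S) < Fintype.card ι) {x : V}
    (hx : x ∈ convexHull 𝕜 S) :
    ∃ p ∈ stdSimplex 𝕜 ι, ∃ z : ι → V, (∀ i, z i ∈ S) ∧ ∑ i, p i • z i = x := by
  obtain ⟨κ, _, z, w, hzS, hz, hw, hw1, rfl⟩ := eq_pos_convex_span_of_mem_convexHull hx
  have : Nonempty κ := by
    by_contra! hκ
    simp at hw1
  have hcard : Fintype.card κ ≤ Fintype.card ι :=
    hz.card_le_finrank_succ.trans
      ((Nat.succ_le_succ (Submodule.finrank_mono (vectorSpan_mono 𝕜 hzS))).trans hS)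
  obtain ⟨g⟩ := Function.Embedding.nonempty_of_card_le hcard
  let p := Function.extend g w 0
  have hpg : ∀ k, p (g k) = w k := g.injective.extend_apply w 0
  have hp0 : ∀ i ∉ Set.range g, p i = 0 := fun i hi => Function.extend_apply' _ _ _ hi
  refine ⟨p, ⟨fun i => ?_, ?_⟩, z ∘ Function.invFun g, fun i => hzS ⟨_, rfl⟩, ?_⟩
  · by_cases hi : i ∈ Set.range g
    · obtain ⟨k, rfl⟩ := hi
      exact (hpg k).symm ▸ (hw k).le
    · exact (hp0 i hi).ge
  · rw [← hw1]
    exact (Fintype.sum_of_injective g g.injective w p hp0 fun k => (hpg k).symm).symm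
  · refine (Fintype.sum_of_injective g g.injective _ _ (fun i hi => ?_) fun k => ?_).symm
    · rw [hp0 i hi, zero_smul]
    · rw [hpg, Function.comp_apply, Function.leftInverse_invFun g.injective]

end Convexity

section Topology

variable {V : Type*} [AddCommGroup V] [Module ℝ V] [FiniteDimensional ℝ V] [TopologicalSpace V]
  [IsTopologicalAddGroup V] [ContinuousSMul ℝ V]

theorem isCompact_convexHull {S : Set V} (hS : IsCompact S) : IsCompact (convexHull ℝ S) := by
  let ι := Fin (finrank ℝ (vectorSpan ℝ S) + 1)
  have himage : convexHull ℝ S = (fun q : (ι → ℝ) × (ι → V) => ∑ i, q.1 i • q.2 i) ''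
      (stdSimplex ℝ ι ×ˢ Set.univ.pi fun _ => S) := by
    refine Set.Subset.antisymm (fun x hx => ?_) ?_
    · obtain ⟨p, hp, z, hz, rfl⟩ := exists_sum_smul_eq_of_mem_convexHull (ι := ι) (by simp [ι]) hx
      exact ⟨(p, z), ⟨hp, fun i _ => hz i⟩, rfl⟩
    · rintro _ ⟨⟨p, z⟩, ⟨⟨hp, hp1⟩, hz⟩, rfl⟩
      exact (convex_convexHull ℝ S).sum_mem (fun i _ => hp i) hp1
        fun i _ => subset_convexHull ℝ S (hz i (Set.mem_univ i))
  rw [himage]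
  exact ((isCompact_stdSimplex ℝ ι).prod (isCompact_univ_pi fun _ => hS)).image (by fun_prop)

theorem subset_convexHull_inter_of_extremePoints_subset [T2Space V] [LocallyConvexSpace ℝ V]
    {K P : Set V} (hK : IsCompact K) (hKconvex : Convex ℝ K) (hP : IsClosed P)
    (hKP : K.extremePoints ℝ ⊆ P) : K ⊆ convexHull ℝ (K ∩ P) := by
  conv_lhs => rw [← closure_convexHull_extremePoints hK hKconvex]
  exact closure_minimal (convexHull_mono fun x hx => ⟨hx.1, hKP hx⟩)
    (isCompact_convexHull (hK.inter_right hP)).isClosed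

end Topology

theorem finrank_vectorSpan_lt {K V F : Type*} [Field K] [AddCommGroup V] [Module K V]
    [AddCommGroup F] [Module K F] {S : Set V} (hS : S.Nonempty) {W : Submodule K V}
    [FiniteDimensional K W] (hSW : S ⊆ W) (f : V →ₗ[K] F) {c : F} (hc : c ≠ 0)
    (hf : ∀ x ∈ S, f x = c) : finrank K (vectorSpan K S) < finrank K W := by
  obtain ⟨x, hx⟩ := hS
  have hspan : vectorSpan K S ≤ W ⊓ f.ker := by
    rw [vectorSpan_def, Submodule.span_le]
    rintro _ ⟨y, hy, z, hz, rfl⟩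
    exact ⟨W.sub_mem (hSW hy) (hSW hz), by simp [hf y hy, hf z hz]⟩
  refine Submodule.finrank_lt_finrank_of_lt (SetLike.lt_iff_le_and_exists.2
    ⟨hspan.trans inf_le_left, x, hSW hx, fun hmem => hc ?_⟩)
  rw [← hf x hx, LinearMap.mem_ker.1 (hspan hmem).2]

open ComplexStarModule in
theorem finrank_selfAdjoint {A : Type*} [AddCommGroup A] [StarAddMonoid A] [Module ℂ A]
    [StarModule ℂ A] [FiniteDimensional ℂ A] : finrank ℝ (selfAdjoint A) = finrank ℂ A := by
  have hbij : Function.Bijective ((ℜ : A →ₗ[ℝ] selfAdjoint A).prod ℑ) := by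
    refine ⟨fun a b hab => ?_, fun ⟨a, b⟩ => ⟨a + Complex.I • (b : A), by simp⟩⟩
    obtain ⟨hre, him⟩ := Prod.mk.inj hab
    rw [← realPart_add_I_smul_imaginaryPart a, hre, him, realPart_add_I_smul_imaginaryPart]
  have : FiniteDimensional ℝ A := FiniteDimensional.complexToReal A
  have hprod := (LinearEquiv.ofBijective _ hbij).finrank_eq
  have : FiniteDimensional ℝ (selfAdjoint A) :=
    inferInstanceAs (FiniteDimensional ℝ (selfAdjoint.submodule ℝ A))
  rw [finrank_prod, finrank_real_of_complex] at hprod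
  lia

section Matrix

variable {𝕜 m n : Type*} [RCLike 𝕜] [Fintype m] [Fintype n]

open scoped Matrix.Norms.Frobenius in
theorem trace_conjTranspose_mul_self (B : Matrix m n 𝕜) : (Bᴴ * B).trace = (‖B‖ ^ 2 : ℝ) := by
  have hnorm : ‖B‖ ^ 2 = ∑ j, ∑ i, ‖B i j‖ ^ 2 := by
    rw [frobenius_norm_def, ← Real.sqrt_eq_rpow, Real.sq_sqrt (by positivity), Finset.sum_comm]
    simp only [Real.rpow_two]
  simp only [hnorm, trace, diag_apply, mul_apply, conjTranspose_apply, RCLike.star_def,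
    RCLike.conj_mul]
  push_cast
  rfl

open scoped MatrixOrder Matrix.Norms.L2Operator in
theorem exists_eq_conjTranspose_mul_self {A : Matrix n n ℂ} (hA : A.PosSemidef) :
    ∃ B : Matrix n n ℂ, A = Bᴴ * B := by
  classical exact CStarAlgebra.nonneg_iff_eq_star_mul_self.1 hA.nonneg

theorem exists_rank_factorization {A : Matrix n n 𝕜} (hA : A.PosSemidef) :
    ∃ B : Matrix n (Fin A.rank) 𝕜, A = B * Bᴴ := by
  classical
  let U : Matrix n n 𝕜 := hA.1.eigenvectorUnitary
  let eig := hA.1.eigenvalues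
  let e : Fin A.rank ≃ {i // eig i ≠ 0} :=
    (finCongr hA.1.rank_eq_card_non_zero_eigs).trans (Fintype.equivFin _).symm
  refine ⟨of fun i k => U i (e k) * (√(eig (e k)) : 𝕜), ?_⟩
  have hsqrt (k) : (√(eig k) : 𝕜) * √(eig k) = eig k := by
    rw [← RCLike.ofReal_mul, Real.mul_self_sqrt (hA.eigenvalues_nonneg k)]
  ext i j
  have hspectral : A i j = ∑ k, U i k * eig k * star (U j k) := by
    conv_lhs => rw [hA.1.spectral_theorem, Unitary.conjStarAlgAut_apply, mul_apply]
    simp only [mul_diagonal, Function.comp_apply, star_apply, U, eig]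
  rw [hspectral, mul_apply]
  refine (Fintype.sum_of_injective (fun k => (e k : n))
    (Subtype.val_injective.comp e.injective) _ _ (fun k hk => ?_) fun k => ?_).symm
  · have heig : eig k = 0 := by
      by_contra h
      exact hk ⟨e.symm ⟨k, h⟩, by simp⟩
    rw [heig, RCLike.ofReal_zero, mul_zero, zero_mul]
  · simp only [of_apply, conjTranspose_apply, star_mul', RCLike.star_def, RCLike.conj_ofReal,
      ← hsqrt]
    ring

open scoped MatrixOrder Matrix.Norms.L2Operator in
theorem exists_posSemidef_one_add_smul {n : Type*} [Finite n] [DecidableEq n] {X : Matrix n n ℂ}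
    (hX : X.IsHermitian) :
    ∃ ε : ℝ, 0 < ε ∧ (1 + ε • X).PosSemidef ∧ (1 - ε • X).PosSemidef := by
  cases nonempty_fintype n
  have hpos : 0 < ‖X‖ + 1 := by positivity
  have hsub {Y : Matrix n n ℂ} (hY : Y.IsHermitian) (hYX : ‖Y‖ = ‖X‖) :
      (1 - (‖X‖ + 1)⁻¹ • Y).PosSemidef := by
    have hle : Y ≤ algebraMap ℝ _ ‖Y‖ := IsSelfAdjoint.le_algebraMap_norm_self hY
    rw [hYX, le_iff, Algebra.algebraMap_eq_smul_one] at hle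
    have hscale := (hle.add PosSemidef.one).smul (inv_nonneg.2 hpos.le)
    have hone : (‖X‖ + 1)⁻¹ • (‖X‖ • (1 : Matrix n n ℂ) - Y + 1) = 1 - (‖X‖ + 1)⁻¹ • Y := by
      match_scalars
      · field_simp
      · simp
    rwa [hone] at hscale
  refine ⟨(‖X‖ + 1)⁻¹, inv_pos.2 hpos, ?_, hsub hX rfl⟩
  simpa using hsub hX.neg (norm_neg X)

theorem isClosed_setOf_rank_le {K m : Type*} [NontriviallyNormedField K] [CompleteSpace K]
    [Finite m] (r : ℕ) : IsClosed {A : Matrix m n K | A.rank ≤ r} := by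
  classical
  cases nonempty_fintype m
  let T : Matrix m n K →ₗ[K] (n → K) →L[K] (m → K) :=
    LinearMap.toContinuousLinearMap.toLinearMap ∘ₗ Matrix.toLin'.toLinearMap
  have hT : Continuous T := T.continuous_of_finiteDimensional
  have hcompl : {A : Matrix m n K | A.rank ≤ r}ᶜ =
      T ⁻¹' {f | ((r + 1 : ℕ) : Cardinal) ≤ (f : (n → K) →ₗ[K] (m → K)).rank} := by
    ext A
    have hrank : (T A : (n → K) →ₗ[K] (m → K)).rank = (A.rank : Cardinal) :=
      (finrank_eq_rank K _).symm
    simp only [Set.mem_compl_iff, Set.mem_ofPred_eq, Set.mem_preimage, hrank, Nat.cast_le, not_le,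
      Nat.succ_le_iff]
  rw [← isOpen_compl_iff, hcompl]
  exact (isOpen_setOfPred_nat_le_rank (r + 1)).preimage hT

theorem isUnit_of_rank_eq_card {K : Type*} [Field K] [DecidableEq n] {A : Matrix n n K}
    (hA : A.rank = Fintype.card n) : IsUnit A := by
  have hrange : LinearMap.range A.mulVecLin = ⊤ :=
    Submodule.eq_top_of_finrank_eq (hA.trans (finrank_fintype_fun_eq_card K).symm)
  exact mulVec_surjective_iff_isUnit.1 (LinearMap.range_eq_top.1 hrange)

theorem mul_mul_conjTranspose_injective {m : Type*} [Finite m] {B : Matrix m n 𝕜}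
    (hB : B.rank = Fintype.card n) :
    Function.Injective fun X : Matrix n n 𝕜 => B * X * Bᴴ := by
  classical
  cases nonempty_fintype m
  have hunit : IsUnit (Bᴴ * B) :=
    isUnit_of_rank_eq_card ((rank_conjTranspose_mul_self B).trans hB)
  intro X Y hXY
  have hconj : Bᴴ * (B * X * Bᴴ) * B = Bᴴ * (B * Y * Bᴴ) * B := congr(Bᴴ * $hXY * B)
  exact hunit.mul_right_injective (hunit.mul_left_injective (by
    simpa only [Matrix.mul_assoc] using hconj))

end Matrix

section Congruence

variable {m n : Type*} [Fintype m]

/-- The congruence `X ↦ B X Bᴴ` on Hermitian matrices. It parametrizes the directions along which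
`B Bᴴ` can be moved both ways inside the positive semidefinite cone. -/
noncomputable def hermitianCongruence (B : Matrix n m ℂ) :
    selfAdjoint (Matrix m m ℂ) →ₗ[ℝ] Matrix n n ℂ :=
  mulRightLinearMap n ℝ Bᴴ ∘ₗ mulLeftLinearMap m ℝ B ∘ₗ (selfAdjoint.submodule ℝ _).subtype

theorem isHermitian_hermitianCongruence (B : Matrix n m ℂ) (X : selfAdjoint (Matrix m m ℂ)) :
    (hermitianCongruence B X).IsHermitian :=
  isHermitian_mul_mul_conjTranspose B X.2

variable [Finite n]

theorem hermitianCongruence_injective {B : Matrix n m ℂ} (hB : B.rank = Fintype.card m) :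
    Function.Injective (hermitianCongruence B) :=
  (mul_mul_conjTranspose_injective hB).comp Subtype.val_injective

theorem exists_posSemidef_add_smul_hermitianCongruence (B : Matrix n m ℂ)
    (X : selfAdjoint (Matrix m m ℂ)) :
    ∃ ε : ℝ, 0 < ε ∧ (B * Bᴴ + ε • hermitianCongruence B X).PosSemidef ∧
      (B * Bᴴ - ε • hermitianCongruence B X).PosSemidef := by
  classical
  obtain ⟨ε, hε, hadd, hsub⟩ := exists_posSemidef_one_add_smul X.2
  have hX : hermitianCongruence B X = B * (X : Matrix m m ℂ) * Bᴴ := rfl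
  refine ⟨ε, hε, ?_, ?_⟩
  · simpa [hX, Matrix.mul_add, Matrix.add_mul] using hadd.mul_mul_conjTranspose_same B
  · simpa [hX, Matrix.mul_sub, Matrix.sub_mul] using hsub.mul_mul_conjTranspose_same B

end Congruence

section Expectation

variable {n : Type*} [Fintype n]

/-- The expectation functional `ρ ↦ Re Tr(H ρ)`, which is only real linear. -/
noncomputable def expectation (H : Matrix n n ℂ) : Matrix n n ℂ →ₗ[ℝ] ℝ :=
  Complex.reLm ∘ₗ traceLinearMap n ℝ ℂ ∘ₗ mulLeftLinearMap n ℝ H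

theorem expectation_apply (H ρ : Matrix n n ℂ) : expectation H ρ = (H * ρ).trace.re := rfl

theorem continuous_expectation (H : Matrix n n ℂ) : Continuous (expectation H) :=
  (expectation H).continuous_of_finiteDimensional

theorem trace_eq_zero_of_expectation_one_eq_zero [DecidableEq n] {A : Matrix n n ℂ}
    (hA : A.IsHermitian) (h : expectation 1 A = 0) : A.trace = 0 := by
  rw [expectation_apply, one_mul] at h
  have him : star A.trace = A.trace := by rw [← trace_conjTranspose, hA.eq]
  exact Complex.ext h (Complex.conj_eq_iff_im.1 him)

end Expectation

section States

variable {d : ℕ}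

open scoped Matrix.Norms.Frobenius in
theorem setOf_isDensityMatrix_eq_image_sphere :
    {ρ : Matrix (Fin d) (Fin d) ℂ | IsDensityMatrix ρ} =
      (fun B => Bᴴ * B) '' Metric.sphere (0 : Matrix (Fin d) (Fin d) ℂ) 1 := by
  have htrace (B : Matrix (Fin d) (Fin d) ℂ) : (Bᴴ * B).trace = 1 ↔ ‖B‖ = 1 := by
    rw [trace_conjTranspose_mul_self, ← RCLike.ofReal_one, RCLike.ofReal_inj,
      pow_eq_one_iff_of_nonneg (norm_nonneg B) two_ne_zero]
  ext ρ
  simp only [Set.mem_image, mem_sphere_zero_iff_norm]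
  constructor
  · rintro ⟨hρ, hρtrace⟩
    obtain ⟨B, rfl⟩ := exists_eq_conjTranspose_mul_self hρ
    exact ⟨B, (htrace B).1 hρtrace, rfl⟩
  · rintro ⟨B, hB, rfl⟩
    exact ⟨posSemidef_conjTranspose_mul_self B, (htrace B).2 hB⟩

open scoped Matrix.Norms.Frobenius in
theorem isCompact_setOf_isDensityMatrix :
    IsCompact {ρ : Matrix (Fin d) (Fin d) ℂ | IsDensityMatrix ρ} := by
  rw [setOf_isDensityMatrix_eq_image_sphere]
  have : ProperSpace (Matrix (Fin d) (Fin d) ℂ) := FiniteDimensional.proper ℂ _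
  exact (isCompact_sphere _ _).image (by fun_prop)

theorem convex_setOf_isDensityMatrix :
    Convex ℝ {ρ : Matrix (Fin d) (Fin d) ℂ | IsDensityMatrix ρ} := by
  rintro ρ ⟨hρ, hρtrace⟩ σ ⟨hσ, hσtrace⟩ a b ha hb hab
  refine ⟨(hρ.smul ha).add (hσ.smul hb), ?_⟩
  rw [trace_add, trace_smul, trace_smul, hρtrace, hσtrace, ← add_smul, hab, one_smul]

theorem finrank_vectorSpan_lt_sq_of_isDensityMatrix {S : Set (Matrix (Fin d) (Fin d) ℂ)}
    (hS : S.Nonempty) (hdensity : ∀ ρ ∈ S, IsDensityMatrix ρ) :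
    finrank ℝ (vectorSpan ℝ S) < d ^ 2 := by
  have hdim : finrank ℝ (selfAdjoint (Matrix (Fin d) (Fin d) ℂ)) = d ^ 2 := by
    rw [finrank_selfAdjoint, finrank_matrix]
    simp [sq]
  rw [← hdim]
  exact finrank_vectorSpan_lt hS (W := selfAdjoint.submodule ℝ _)
    (fun ρ hρ => (hdensity ρ hρ).1.1) (traceLinearMap (Fin d) ℝ ℂ) one_ne_zero
    fun ρ hρ => (hdensity ρ hρ).2

theorem IsDensityMatrix.isPureState_of_rank_le_one {ρ : Matrix (Fin d) (Fin d) ℂ}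
    (hρ : IsDensityMatrix ρ) (hrank : ρ.rank ≤ 1) : IsPureState ρ := by
  refine ⟨hρ, ?_⟩
  obtain ⟨B, hB⟩ := exists_rank_factorization hρ.1
  have : Subsingleton (Fin ρ.rank) := Fin.subsingleton_iff_le_one.2 hrank
  have htrace : (Bᴴ * B).trace = 1 := by rw [trace_mul_comm, ← hB, hρ.2]
  have hone : Bᴴ * B = 1 := by
    ext i j
    rw [Subsingleton.elim j i, one_apply_eq, ← htrace, trace, Fintype.sum_subsingleton _ i,
      diag_apply]
  calc ρ * ρ = (B * Bᴴ) * (B * Bᴴ) := congr($hB * $hB)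
    _ = B * (Bᴴ * B) * Bᴴ := by simp only [Matrix.mul_assoc]
    _ = ρ := by rw [hone, Matrix.mul_one]; exact hB.symm

variable {κ : Type*}

/-- The density matrices `ρ` with `Re Tr(H k ρ) ≤ E k` for every `k`, with equality for `k ∈ s`. -/
def constrainedStates (H : κ → Matrix (Fin d) (Fin d) ℂ) (E : κ → ℝ) (s : Set κ) :
    Set (Matrix (Fin d) (Fin d) ℂ) :=
  {ρ | IsDensityMatrix ρ ∧ (∀ k ∉ s, (H k * ρ).trace.re ≤ E k) ∧
    ∀ k ∈ s, (H k * ρ).trace.re = E k}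

variable (H : κ → Matrix (Fin d) (Fin d) ℂ) (E : κ → ℝ) (s : Set κ)

theorem constrainedStates_eq_inter : constrainedStates H E s =
    {ρ | IsDensityMatrix ρ} ∩ ((⋂ k ∈ sᶜ, {ρ | expectation (H k) ρ ≤ E k}) ∩
      ⋂ k ∈ s, {ρ | expectation (H k) ρ = E k}) := by
  ext ρ
  simp [constrainedStates, expectation_apply]

theorem isCompact_constrainedStates : IsCompact (constrainedStates H E s) := by
  rw [constrainedStates_eq_inter]
  refine isCompact_setOf_isDensityMatrix.inter_right (.inter ?_ ?_)
  · exact isClosed_biInter fun k _ => isClosed_le (continuous_expectation (H k)) continuous_const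
  · exact isClosed_biInter fun k _ => isClosed_eq (continuous_expectation (H k)) continuous_const

theorem convex_constrainedStates : Convex ℝ (constrainedStates H E s) := by
  rw [constrainedStates_eq_inter]
  refine convex_setOf_isDensityMatrix.inter (.inter ?_ ?_)
  · exact convex_iInter₂ fun k _ => convex_halfSpace_le (expectation (H k)).isLinear (E k)
  · exact convex_iInter₂ fun k _ => convex_hyperplane (expectation (H k)).isLinear (E k)

variable {H E s}

theorem add_mem_constrainedStates {ρ A : Matrix (Fin d) (Fin d) ℂ}
    (hρ : ρ ∈ constrainedStates H E s) (hpos : (ρ + A).PosSemidef) (htrace : A.trace = 0)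
    (hA : ∀ k, expectation (H k) A = 0) : ρ + A ∈ constrainedStates H E s := by
  have hexp (k) : (H k * (ρ + A)).trace.re = (H k * ρ).trace.re := by
    rw [← expectation_apply, map_add, hA, add_zero, expectation_apply]
  refine ⟨⟨hpos, by rw [trace_add, hρ.1.2, htrace, add_zero]⟩, fun k hk => ?_, fun k hk => ?_⟩
  · exact (hexp k).trans_le (hρ.2.1 k hk)
  · exact (hexp k).trans (hρ.2.2 k hk)

theorem sq_rank_le_of_mem_extremePoints_constrainedStates [Fintype κ]
    {ρ : Matrix (Fin d) (Fin d) ℂ} (hρ : ρ ∈ (constrainedStates H E s).extremePoints ℝ) :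
    ρ.rank ^ 2 ≤ Fintype.card κ + 1 := by
  obtain ⟨B, hB⟩ := exists_rank_factorization hρ.1.1.1
  have hBrank : B.rank = Fintype.card (Fin ρ.rank) := by
    rw [← rank_self_mul_conjTranspose, ← hB, Fintype.card_fin]
  let L := hermitianCongruence B
  -- The index `none` carries the trace condition.
  let f : selfAdjoint (Matrix (Fin ρ.rank) (Fin ρ.rank) ℂ) →ₗ[ℝ] Option κ → ℝ :=
    LinearMap.pi fun k => expectation (k.elim 1 H) ∘ₗ L
  have hfeasible (X) (hX : f X = 0) : ∃ ε : ℝ, 0 < ε ∧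
      ρ + ε • L X ∈ constrainedStates H E s ∧ ρ - ε • L X ∈ constrainedStates H E s := by
    obtain ⟨ε, hε, hadd, hsub⟩ := exists_posSemidef_add_smul_hermitianCongruence B X
    rw [← hB] at hadd hsub
    have htrace : (L X).trace = 0 := trace_eq_zero_of_expectation_one_eq_zero
      (isHermitian_hermitianCongruence B X) (congrFun hX none)
    have hexp (k) : expectation (H k) (L X) = 0 := congrFun hX (some k)
    refine ⟨ε, hε, add_mem_constrainedStates hρ.1 hadd ?_ ?_, ?_⟩
    · rw [trace_smul, htrace, smul_zero]
    · simp [hexp]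
    · rw [sub_eq_add_neg] at hsub ⊢
      refine add_mem_constrainedStates hρ.1 hsub ?_ ?_
      · rw [trace_neg, trace_smul, htrace, smul_zero, neg_zero]
      · simp [hexp]
  have : FiniteDimensional ℝ (selfAdjoint (Matrix (Fin ρ.rank) (Fin ρ.rank) ℂ)) :=
    inferInstanceAs (FiniteDimensional ℝ (selfAdjoint.submodule ℝ _))
  have hdim := finrank_le_of_mem_extremePoints hρ (hermitianCongruence_injective hBrank) f hfeasible
  simpa [finrank_selfAdjoint, finrank_matrix, sq] using hdim

theorem constrainedStates_subset_convexHull_sq_rank_le [Fintype κ]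
    (H : κ → Matrix (Fin d) (Fin d) ℂ) (E : κ → ℝ) (s : Set κ) :
    constrainedStates H E s ⊆
      convexHull ℝ (constrainedStates H E s ∩ {ρ | ρ.rank ^ 2 ≤ Fintype.card κ + 1}) := by
  have : LocallyConvexSpace ℝ (Matrix (Fin d) (Fin d) ℂ) :=
    inferInstanceAs (LocallyConvexSpace ℝ (Fin d → Fin d → ℂ))
  have hclosed : IsClosed {ρ : Matrix (Fin d) (Fin d) ℂ | ρ.rank ^ 2 ≤ Fintype.card κ + 1} := by
    simpa only [Nat.le_sqrt'] using
      isClosed_setOf_rank_le (K := ℂ) (m := Fin d) (n := Fin d) (Fintype.card κ + 1).sqrt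
  exact subset_convexHull_inter_of_extremePoints_subset (isCompact_constrainedStates H E s)
    (convex_constrainedStates H E s) hclosed
    fun _ hρ => sq_rank_le_of_mem_extremePoints_constrainedStates hρ

end States

end

theorem stmt19_general {d : ℕ} {κ : Type*} [Fintype κ] (H : κ → Matrix (Fin d) (Fin d) ℂ)
    (E : κ → ℝ) (s : Set κ) :
    IsCompact (constrainedStates H E s) ∧ Convex ℝ (constrainedStates H E s) ∧
    ∀ ρ ∈ constrainedStates H E s,
      ∃ (p : Fin (d ^ 2) → ℝ) (σ : Fin (d ^ 2) → Matrix (Fin d) (Fin d) ℂ),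
        (∀ i, 0 ≤ p i) ∧ ∑ i, p i = 1 ∧
        (∀ i, (σ i).rank ^ 2 ≤ Fintype.card κ + 1 ∧ σ i ∈ constrainedStates H E s) ∧
        ρ = ∑ i, p i • σ i := by
  refine ⟨isCompact_constrainedStates H E s, convex_constrainedStates H E s, fun ρ hρ => ?_⟩
  have hmix := constrainedStates_subset_convexHull_sq_rank_le H E s hρ
  have hdim := finrank_vectorSpan_lt_sq_of_isDensityMatrix
    (convexHull_nonempty_iff.1 ⟨ρ, hmix⟩) fun σ hσ => hσ.1.1
  obtain ⟨p, ⟨hp, hsum⟩, σ, hσ, hρσ⟩ :=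
    exists_sum_smul_eq_of_mem_convexHull (ι := Fin (d ^ 2)) (by simpa using hdim) hmix
  exact ⟨p, σ, hp, hsum, fun i => (hσ i).symm, hρσ.symm⟩

theorem stmt19 (d : ℕ) (hd : 1 ≤ d)
    (H : Fin 2 → Matrix (Fin d) (Fin d) ℂ) (hH : ∀ k, (H k).PosSemidef)
    (E : Fin 2 → ℝ) (s : Set (Fin 2)) :
    IsCompact {ρ : Matrix (Fin d) (Fin d) ℂ | IsDensityMatrix ρ ∧
        (∀ k ∉ s, (H k * ρ).trace.re ≤ E k) ∧ (∀ k ∈ s, (H k * ρ).trace.re = E k)} ∧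
    Convex ℝ {ρ : Matrix (Fin d) (Fin d) ℂ | IsDensityMatrix ρ ∧
        (∀ k ∉ s, (H k * ρ).trace.re ≤ E k) ∧ (∀ k ∈ s, (H k * ρ).trace.re = E k)} ∧
    ∀ ρ ∈ {ρ : Matrix (Fin d) (Fin d) ℂ | IsDensityMatrix ρ ∧
        (∀ k ∉ s, (H k * ρ).trace.re ≤ E k) ∧ (∀ k ∈ s, (H k * ρ).trace.re = E k)},
      ∃ (p : Fin (d ^ 2) → ℝ) (σ : Fin (d ^ 2) → Matrix (Fin d) (Fin d) ℂ),
        (∀ i, 0 ≤ p i) ∧ (∑ i, p i) = 1 ∧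
        (∀ i, IsPureState (σ i) ∧
          σ i ∈ {ρ : Matrix (Fin d) (Fin d) ℂ | IsDensityMatrix ρ ∧
            (∀ k ∉ s, (H k * ρ).trace.re ≤ E k) ∧
            (∀ k ∈ s, (H k * ρ).trace.re = E k)}) ∧
        ρ = ∑ i, p i • σ i := by
  obtain ⟨hcompact, hconvex, hmix⟩ := stmt19_general H E s
  refine ⟨hcompact, hconvex, fun ρ hρ => ?_⟩
  obtain ⟨p, σ, hp, hsum, hσ, hρσ⟩ := hmix ρ hρ
  have hrank (i) : (σ i).rank ≤ 1 := Nat.le_of_lt_succ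
    (lt_of_pow_lt_pow_left₀ 2 zero_le_two ((hσ i).1.trans_lt (by simp)))
  exact ⟨p, σ, hp, hsum, fun i =>
    ⟨(hσ i).2.1.isPureState_of_rank_le_one (hrank i), (hσ i).2⟩, hρσ⟩
end
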